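/- Let u, v be smooth functions on S^2 with v compactly supported in an open set U, and let α be a smooth function on U satisfying (Δ+2)α = 0 on U. Then ∫_U [u(∇_A∇_B v - (1/2)(Δv)σ_{AB}) - v(∇_A∇_B u - (1/2)(Δu)σ_{AB})] ∇^A∇^B α = 0. -/

import Mathlib

open MeasureTheory Real
noncomputable section

/-- Points of the stereographic chart of the round unit sphere `S²`
(the chart covers `S²` minus the north pole). -/
abbrev Pt := Fin 2 → ℝ

/-- Partial derivative `∂_a f`. -/
def pd (a : Fin 2) (f : Pt → ℝ) (x : Pt) : ℝ := fderiv ℝ f x (Pi.single a 1)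

/-- The round (unit sphere) metric `σ_{AB}` in stereographic coordinates. -/
def rnd (x : Pt) (a b : Fin 2) : ℝ :=
  (4 / (1 + x 0 ^ 2 + x 1 ^ 2) ^ 2) * (if a = b then 1 else 0)

/-- The inverse round metric `σ^{AB}`. -/
def rndInv (x : Pt) (a b : Fin 2) : ℝ :=
  ((1 + x 0 ^ 2 + x 1 ^ 2) ^ 2 / 4) * (if a = b then 1 else 0)

/-- The area form `ε_{AB}` of the round metric. -/
def rndE (x : Pt) (a b : Fin 2) : ℝ :=
  (4 / (1 + x 0 ^ 2 + x 1 ^ 2) ^ 2) *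
    (if a = 0 ∧ b = 1 then 1 else if a = 1 ∧ b = 0 then -1 else 0)

/-- The area form with raised indices `ε^{AB}`. -/
def rndEUp (x : Pt) (a b : Fin 2) : ℝ :=
  ∑ c, ∑ d, rndInv x a c * rndInv x b d * rndE x c d

/-- Christoffel symbols `Γ^c_{ab}` of the round metric. -/
def Gam (c a b : Fin 2) (x : Pt) : ℝ :=
  (1/2) * ∑ d, rndInv x c d *
    (pd a (fun y => rnd y d b) x + pd b (fun y => rnd y d a) x - pd d (fun y => rnd y a b) x)

/-- Covariant derivative `∇_a Y^b` of a vector field. -/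
def cdVec (Y : Pt → Fin 2 → ℝ) (x : Pt) (a b : Fin 2) : ℝ :=
  pd a (fun y => Y y b) x + ∑ c, Gam b a c x * Y x c

/-- Covariant derivative `∇_a ω_b` of a covector field. -/
def cdCov (ω : Pt → Fin 2 → ℝ) (x : Pt) (a b : Fin 2) : ℝ :=
  pd a (fun y => ω y b) x - ∑ c, Gam c a b x * ω x c

/-- Covariant derivative `∇_a T_{bc}` of a (0,2)-tensor. -/
def cdT2 (T : Pt → Fin 2 → Fin 2 → ℝ) (x : Pt) (a b c : Fin 2) : ℝ :=
  pd a (fun y => T y b c) x - ∑ d, Gam d a b x * T x d c - ∑ d, Gam d a c x * T x b d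

/-- Covariant derivative `∇_a T_b{}^c` of a (1,1)-tensor (lower, upper). -/
def cdMix (T : Pt → Fin 2 → Fin 2 → ℝ) (x : Pt) (a b c : Fin 2) : ℝ :=
  pd a (fun y => T y b c) x - ∑ d, Gam d a b x * T x d c + ∑ d, Gam c a d x * T x b d

/-- Covariant Hessian `∇_a ∇_b f`. -/
def hess (f : Pt → ℝ) (x : Pt) (a b : Fin 2) : ℝ := cdCov (fun y c => pd c f y) x a b

/-- Laplace–Beltrami operator `Δf = σ^{ab} ∇_a∇_b f` of the round metric. -/
def lap (f : Pt → ℝ) (x : Pt) : ℝ := ∑ a, ∑ b, rndInv x a b * hess f x a b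

/-- Covariant divergence `∇_A Y^A` of a vector field. -/
def divg (Y : Pt → Fin 2 → ℝ) (x : Pt) : ℝ := ∑ a, cdVec Y x a a

/-- The area density `√(det σ)` of the round metric in stereographic coordinates. -/
def aDen (x : Pt) : ℝ := 4 / (1 + x 0 ^ 2 + x 1 ^ 2) ^ 2

/-- Smoothness of a vector field. -/
def SmoothVec (Y : Pt → Fin 2 → ℝ) : Prop := ∀ b, ContDiff ℝ (⊤ : ℕ∞) (fun x => Y x b)

/-- The conformal Killing equation `∇^A Y^B + ∇^B Y^A = (∇_C Y^C) σ^{AB}` on a set `U`. -/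
def ConformalKilling (Y : Pt → Fin 2 → ℝ) (U : Set Pt) : Prop :=
  ∀ x ∈ U, ∀ A B : Fin 2,
    (∑ c, rndInv x A c * cdVec Y x c B) + (∑ c, rndInv x B c * cdVec Y x c A)
      = divg Y x * rndInv x A B

/-- The curl `ε_{AB} ∇^A Y^B` of a vector field. -/
def curl (Y : Pt → Fin 2 → ℝ) (x : Pt) : ℝ :=
  ∑ a, ∑ b, ∑ c, rndE x a b * rndInv x a c * cdVec Y x c b

/-!
Write `S = ∇∇α - (Δα + α)σ`. Since the round sphere has curvature `1`, commuting derivatives gives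
`∇^a ∇_a ∇_c α = ∇_c Δα + ∇_c α`, so `S` is divergence free; its trace is `-(Δ + 2)α`. Let
`W = u dv - v du`, whose divergence is `uΔv - vΔu`. The symmetric part of `∇W` is `u∇∇v - v∇∇u`,
so `div (S W^♯) = ⟨S, ∇W⟩ = ⟨S, u∇∇v - v∇∇u⟩`, and splitting off traces turns this into the identity

  `integrand = div (S W^♯) + ½ (uΔv - vΔu)(Δ + 2)α`.

The vector field `S W^♯` is supported in the support of `v`, so its divergence integrates to zero.
-/

theorem pd_const (a : Fin 2) (k : ℝ) (x : Pt) : pd a (fun _ => k) x = 0 := by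
  simp [pd]

theorem pd_coord (a b : Fin 2) (x : Pt) : pd a (fun y => y b) x = if a = b then 1 else 0 := by
  simp [pd, (hasFDerivAt_apply (𝕜 := ℝ) b x).fderiv, Pi.single_apply, eq_comm]

section Calculus

variable {f g : Pt → ℝ} {x : Pt}

theorem pd_add (a : Fin 2) (hf : DifferentiableAt ℝ f x) (hg : DifferentiableAt ℝ g x) :
    pd a (fun y => f y + g y) x = pd a f x + pd a g x := by
  simp [pd, fderiv_fun_add hf hg]

theorem pd_sub (a : Fin 2) (hf : DifferentiableAt ℝ f x) (hg : DifferentiableAt ℝ g x) :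
    pd a (fun y => f y - g y) x = pd a f x - pd a g x := by
  simp [pd, fderiv_fun_sub hf hg]

theorem pd_sum {ι : Type*} (a : Fin 2) {s : Finset ι} {F : ι → Pt → ℝ}
    (hF : ∀ i ∈ s, DifferentiableAt ℝ (F i) x) :
    pd a (fun y => ∑ i ∈ s, F i y) x = ∑ i ∈ s, pd a (F i) x := by
  simp [pd, fderiv_fun_sum hF]

theorem pd_mul (a : Fin 2) (hf : DifferentiableAt ℝ f x) (hg : DifferentiableAt ℝ g x) :
    pd a (fun y => f y * g y) x = pd a f x * g x + f x * pd a g x := by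
  simp [pd, fderiv_fun_mul hf hg, add_comm, mul_comm]

theorem pd_pow (a : Fin 2) (n : ℕ) (hf : DifferentiableAt ℝ f x) :
    pd a (fun y => f y ^ n) x = n * f x ^ (n - 1) * pd a f x := by
  simp [pd, fderiv_fun_pow n hf]

theorem pd_inv (a : Fin 2) (hf : DifferentiableAt ℝ f x) (hx : f x ≠ 0) :
    pd a (fun y => (f y)⁻¹) x = -pd a f x / f x ^ 2 := by
  have h := ((hasDerivAt_inv hx).comp_hasFDerivAt x hf.hasFDerivAt).fderiv
  simp only [Function.comp_def] at h
  simp [pd, h, div_eq_inv_mul]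

theorem contDiffAt_pd {n m : WithTop ℕ∞} (a : Fin 2) (hf : ContDiffAt ℝ n f x)
    (hmn : m + 1 ≤ n) : ContDiffAt ℝ m (pd a f) x :=
  (hf.fderiv_right hmn).clm_apply contDiffAt_const

theorem pd_comm (a b : Fin 2) (hf : ContDiffAt ℝ 2 f x) :
    pd a (pd b f) x = pd b (pd a f) x := by
  have hf' : DifferentiableAt ℝ (fderiv ℝ f) x :=
    (hf.fderiv_right (m := 1) (by norm_num)).differentiableAt (by simp)
  have pd_pd (c d : Fin 2) :
      pd c (pd d f) x = fderiv ℝ (fderiv ℝ f) x (Pi.single c 1) (Pi.single d 1) := by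
    change fderiv ℝ (fun y => fderiv ℝ f y (Pi.single d 1)) x (Pi.single c 1) = _
    simp [fderiv_clm_apply hf' (differentiableAt_const _)]
  rw [pd_pd, pd_pd]
  exact hf.isSymmSndFDerivAt (by simp) _ _

end Calculus

/-- The denominator `1 + |x|²` of the stereographic chart: the round metric is
`(2 / stereoDen)²` times the flat one. -/
def stereoDen (x : Pt) : ℝ := 1 + x 0 ^ 2 + x 1 ^ 2

theorem stereoDen_pos (x : Pt) : 0 < stereoDen x := by
  unfold stereoDen
  positivity

theorem contDiff_stereoDen {n : WithTop ℕ∞} : ContDiff ℝ n stereoDen := by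
  unfold stereoDen
  fun_prop

theorem differentiableAt_stereoDen (x : Pt) : DifferentiableAt ℝ stereoDen x :=
  contDiff_stereoDen.contDiffAt.differentiableAt one_ne_zero

theorem aDen_eq (x : Pt) : aDen x = 4 * (stereoDen x)⁻¹ ^ 2 := by
  rw [inv_pow, ← div_eq_mul_inv]
  rfl

theorem rnd_eq (x : Pt) (a b : Fin 2) : rnd x a b = aDen x * if a = b then 1 else 0 :=
  rfl

theorem rnd_symm (x : Pt) (a b : Fin 2) : rnd x a b = rnd x b a := by
  simp only [rnd_eq, eq_comm]

theorem rndInv_eq (x : Pt) (a b : Fin 2) :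
    rndInv x a b = stereoDen x ^ 2 / 4 * if a = b then 1 else 0 :=
  rfl

theorem aDen_pos (x : Pt) : 0 < aDen x := by
  have := stereoDen_pos x
  rw [aDen_eq]
  positivity

theorem contDiff_aDen {n : WithTop ℕ∞} : ContDiff ℝ n aDen := by
  simp only [funext aDen_eq]
  exact contDiff_const.mul ((contDiff_stereoDen.inv fun x => (stereoDen_pos x).ne').pow 2)

theorem differentiableAt_aDen (x : Pt) : DifferentiableAt ℝ aDen x :=
  contDiff_aDen.contDiffAt.differentiableAt one_ne_zero

theorem contDiff_rndInv {n : WithTop ℕ∞} (a b : Fin 2) : ContDiff ℝ n (fun x => rndInv x a b) := by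
  simp only [rndInv_eq]
  exact ((contDiff_stereoDen.pow 2).div_const 4).mul contDiff_const

theorem differentiableAt_rndInv (a b : Fin 2) (x : Pt) :
    DifferentiableAt ℝ (fun y => rndInv y a b) x :=
  (contDiff_rndInv a b).contDiffAt.differentiableAt one_ne_zero

theorem pd_stereoDen (a : Fin 2) (x : Pt) : pd a stereoDen x = 2 * x a := by
  unfold stereoDen
  rw [pd_add, pd_add, pd_const, pd_pow, pd_pow, pd_coord, pd_coord]
  · grind
  all_goals fun_prop

theorem pd_inv_stereoDen (a : Fin 2) (x : Pt) :
    pd a (fun y => (stereoDen y)⁻¹) x = -(2 * x a) / stereoDen x ^ 2 := by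
  rw [pd_inv a (differentiableAt_stereoDen x) (stereoDen_pos x).ne', pd_stereoDen]

theorem differentiableAt_inv_stereoDen (x : Pt) :
    DifferentiableAt ℝ (fun y => (stereoDen y)⁻¹) x :=
  (differentiableAt_stereoDen x).inv (stereoDen_pos x).ne'

theorem pd_aDen (a : Fin 2) (x : Pt) : pd a aDen x = -(4 * x a / stereoDen x) * aDen x := by
  have hinv := differentiableAt_inv_stereoDen x
  simp only [funext aDen_eq]
  rw [pd_mul a (by fun_prop) (by fun_prop), pd_const, pd_pow a 2 hinv, pd_inv_stereoDen]
  ring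

theorem pd_rnd (a b c : Fin 2) (x : Pt) :
    pd a (fun y => rnd y b c) x = -(4 * x a / stereoDen x) * rnd x b c := by
  simp only [rnd_eq]
  rw [pd_mul a (differentiableAt_aDen x) (by fun_prop), pd_aDen, pd_const]
  ring

theorem pd_rndInv (a b c : Fin 2) (x : Pt) :
    pd a (fun y => rndInv y b c) x = 4 * x a / stereoDen x * rndInv x b c := by
  have hs := differentiableAt_stereoDen x
  simp only [rndInv_eq, div_eq_mul_inv]
  rw [pd_mul a (by fun_prop) (by fun_prop), pd_mul a (by fun_prop) (by fun_prop), pd_const,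
    pd_const, pd_pow a 2 hs, pd_stereoDen]
  field_simp [(stereoDen_pos x).ne']
  ring

theorem Gam_eq (c a b : Fin 2) (x : Pt) :
    Gam c a b x = -(2 / stereoDen x) *
      ((if c = b then 1 else 0) * x a + (if c = a then 1 else 0) * x b
        - (if a = b then 1 else 0) * x c) := by
  have hne := (stereoDen_pos x).ne'
  simp only [Gam, pd_rnd]
  simp only [rndInv_eq, rnd_eq, aDen_eq, ite_mul, mul_ite, one_mul, zero_mul, mul_zero, mul_one,
    Finset.sum_ite_eq, Finset.mem_univ, if_true]
  field_simp
  grind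

theorem Gam_symm (c a b : Fin 2) (x : Pt) : Gam c a b x = Gam c b a x := by
  rw [Gam_eq, Gam_eq, add_comm]
  simp only [eq_comm]

theorem sum_Gam_self (b : Fin 2) (x : Pt) : ∑ a, Gam a a b x = -(4 * x b / stereoDen x) := by
  simp only [Gam_eq, Fin.sum_univ_two]
  grind

theorem cdT2_rnd (x : Pt) (a b c : Fin 2) : cdT2 rnd x a b c = 0 := by
  simp only [cdT2, pd_rnd, Gam_eq, Fin.sum_univ_two]
  simp only [rnd_eq]
  grind

theorem pd_rndInv_eq_Gam (a b c : Fin 2) (x : Pt) :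
    pd a (fun y => rndInv y b c) x
      = -(∑ d, Gam b a d x * rndInv x d c) - ∑ d, Gam c a d x * rndInv x b d := by
  simp only [pd_rndInv, Gam_eq, Fin.sum_univ_two]
  simp only [rndInv_eq]
  grind

theorem contDiff_Gam {n : WithTop ℕ∞} (c a b : Fin 2) : ContDiff ℝ n (Gam c a b) := by
  simp only [funext (Gam_eq c a b), div_eq_mul_inv]
  have hinv : ContDiff ℝ n fun x => (stereoDen x)⁻¹ :=
    contDiff_stereoDen.inv fun x => (stereoDen_pos x).ne'
  exact (contDiff_const.mul hinv).neg.mul (by fun_prop)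

theorem differentiableAt_Gam (c a b : Fin 2) (x : Pt) : DifferentiableAt ℝ (Gam c a b) x :=
  (contDiff_Gam c a b).contDiffAt.differentiableAt one_ne_zero

theorem pd_Gam (d c a b : Fin 2) (x : Pt) :
    pd d (Gam c a b) x = -(2 * x d / stereoDen x) * Gam c a b x - 2 / stereoDen x *
      ((if c = b then 1 else 0) * (if d = a then 1 else 0)
        + (if c = a then 1 else 0) * (if d = b then 1 else 0)
        - (if a = b then 1 else 0) * (if d = c then 1 else 0)) := by
  have hs := differentiableAt_inv_stereoDen x
  have hcoord (e : Fin 2) : DifferentiableAt ℝ (fun y : Pt => y e) x := by fun_prop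
  simp only [funext (Gam_eq c a b), div_eq_mul_inv]
  rw [pd_mul d (by fun_prop) (by fun_prop), pd_sub d (by fun_prop) (by fun_prop),
    pd_add d (by fun_prop) (by fun_prop), pd_mul d (by fun_prop) (hcoord a),
    pd_mul d (by fun_prop) (hcoord b), pd_mul d (by fun_prop) (hcoord c)]
  simp only [← neg_mul]
  rw [pd_mul d (by fun_prop) hs]
  simp only [pd_const, pd_coord, pd_inv_stereoDen]
  ring

/-- The Riemann curvature tensor `R^d_{cab}` of the round metric, with the sign convention
`∇_a∇_b Y^d - ∇_b∇_a Y^d = R^d_{cab} Y^c`. -/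
def riemann (d c a b : Fin 2) (x : Pt) : ℝ :=
  pd a (Gam d b c) x - pd b (Gam d a c) x
    + ∑ e, (Gam d a e x * Gam e b c x - Gam d b e x * Gam e a c x)

theorem riemann_eq (d c a b : Fin 2) (x : Pt) :
    riemann d c a b x
      = (if d = a then 1 else 0) * rnd x b c - (if d = b then 1 else 0) * rnd x a c := by
  have hne := (stereoDen_pos x).ne'
  have hs : stereoDen x = 1 + x 0 ^ 2 + x 1 ^ 2 := rfl
  simp only [riemann, pd_Gam, Gam_eq, rnd_eq, aDen_eq, Fin.sum_univ_two]
  grind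

section Leibniz

variable {φ : Pt → ℝ} {ω Y : Pt → Fin 2 → ℝ} {S T : Pt → Fin 2 → Fin 2 → ℝ} {x : Pt}

theorem cdT2_sub (hS : ∀ b c, DifferentiableAt ℝ (fun y => S y b c) x)
    (hT : ∀ b c, DifferentiableAt ℝ (fun y => T y b c) x) (a b c : Fin 2) :
    cdT2 (fun y d e => S y d e - T y d e) x a b c = cdT2 S x a b c - cdT2 T x a b c := by
  simp only [cdT2, pd_sub a (hS b c) (hT b c), mul_sub, Finset.sum_sub_distrib]
  ring

theorem cdT2_mul (hφ : DifferentiableAt ℝ φ x)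
    (hT : ∀ b c, DifferentiableAt ℝ (fun y => T y b c) x) (a b c : Fin 2) :
    cdT2 (fun y d e => φ y * T y d e) x a b c = pd a φ x * T x b c + φ x * cdT2 T x a b c := by
  simp only [cdT2, pd_mul a hφ (hT b c), mul_sub, Finset.mul_sum, mul_left_comm, add_sub_assoc]

/-- The vector field `σ^{ab} ω_b` obtained from a covector field by raising its index. -/
def sharp (ω : Pt → Fin 2 → ℝ) (x : Pt) (a : Fin 2) : ℝ := ∑ b, rndInv x a b * ω x b

theorem differentiableAt_sharp
    (hω : ∀ b, DifferentiableAt ℝ (fun y => ω y b) x) (a : Fin 2) :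
    DifferentiableAt ℝ (fun y => sharp ω y a) x :=
  DifferentiableAt.fun_sum fun b _ => (differentiableAt_rndInv a b x).mul (hω b)

theorem cdVec_sharp (hω : ∀ b, DifferentiableAt ℝ (fun y => ω y b) x)
    (a b : Fin 2) : cdVec (sharp ω) x a b = ∑ c, rndInv x b c * cdCov ω x a c := by
  simp only [cdVec, cdCov, sharp,
    pd_sum a fun c _ => (differentiableAt_rndInv b c x).fun_mul (hω c),
    pd_mul a (differentiableAt_rndInv b _ x) (hω _), pd_rndInv_eq_Gam]
  simp only [Fin.sum_univ_two]
  ring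

/-- The covector field `T_{ab} Y^b`. -/
def contractVec (T : Pt → Fin 2 → Fin 2 → ℝ) (Y : Pt → Fin 2 → ℝ) (x : Pt) (a : Fin 2) : ℝ :=
  ∑ b, T x a b * Y x b

theorem cdCov_contractVec (hT : ∀ b c, DifferentiableAt ℝ (fun y => T y b c) x)
    (hY : ∀ b, DifferentiableAt ℝ (fun y => Y y b) x) (a b : Fin 2) :
    cdCov (contractVec T Y) x a b = ∑ c, (cdT2 T x a b c * Y x c + T x b c * cdVec Y x a c) := by
  simp only [cdVec, cdCov, cdT2, contractVec, pd_sum a fun c _ => (hT b c).fun_mul (hY c),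
    pd_mul a (hT b _) (hY _)]
  simp only [Fin.sum_univ_two]
  ring

theorem pd_trace (hT : ∀ b c, DifferentiableAt ℝ (fun y => T y b c) x) (c : Fin 2) :
    pd c (fun y => ∑ a, ∑ b, rndInv y a b * T y a b) x
      = ∑ a, ∑ b, rndInv x a b * cdT2 T x c a b := by
  have hterm (a b : Fin 2) := (differentiableAt_rndInv a b x).fun_mul (hT a b)
  simp only [pd_sum c fun a _ => DifferentiableAt.fun_sum fun b _ => hterm a b,
    pd_sum c fun b _ => hterm _ b, pd_mul c (differentiableAt_rndInv _ _ x) (hT _ _),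
    pd_rndInv_eq_Gam, cdT2]
  simp only [Fin.sum_univ_two]
  ring

theorem divg_sharp (hω : ∀ b, DifferentiableAt ℝ (fun y => ω y b) x) :
    divg (sharp ω) x = ∑ a, ∑ b, rndInv x a b * cdCov ω x a b := by
  simp only [divg, cdVec_sharp hω]

end Leibniz

theorem divg_eq (Y : Pt → Fin 2 → ℝ) (x : Pt) :
    divg Y x = ∑ a, (pd a (fun y => Y y a) x - 4 * x a / stereoDen x * Y x a) := by
  calc divg Y x = ∑ a, (pd a (fun y => Y y a) x + (∑ b, Gam b b a x) * Y x a) := by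
        simp only [divg, cdVec, Fin.sum_univ_two]
        ring
    _ = _ := by simp only [sum_Gam_self, neg_mul, sub_eq_add_neg]

theorem divg_mul_aDen {Y : Pt → Fin 2 → ℝ} {x : Pt}
    (hY : ∀ b, DifferentiableAt ℝ (fun y => Y y b) x) :
    divg Y x * aDen x = ∑ a, pd a (fun y => aDen y * Y y a) x := by
  simp only [divg_eq, pd_mul _ (differentiableAt_aDen x) (hY _), pd_aDen, Finset.sum_mul]
  exact Finset.sum_congr rfl fun a _ => by ring

theorem cdT2_cdCov_sub_swap {ω : Pt → Fin 2 → ℝ} {x : Pt}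
    (hω : ∀ b, ContDiffAt ℝ 2 (fun y => ω y b) x) (a b c : Fin 2) :
    cdT2 (cdCov ω) x a b c - cdT2 (cdCov ω) x b a c = -∑ d, riemann d c a b x * ω x d := by
  have hω₁ (e : Fin 2) : DifferentiableAt ℝ (fun y => ω y e) x :=
    (hω e).differentiableAt two_ne_zero
  have hω₂ (d e : Fin 2) : DifferentiableAt ℝ (pd d fun y => ω y e) x :=
    (contDiffAt_pd (m := 1) d (hω e) (by norm_num)).differentiableAt one_ne_zero
  have hΓω (d e f : Fin 2) := (differentiableAt_Gam f d e x).fun_mul (hω₁ f)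
  have pd_cdCov (d e f : Fin 2) : pd d (fun y => cdCov ω y e f) x
      = pd d (pd e fun y => ω y f) x
        - ∑ g, (pd d (Gam g e f) x * ω x g + Gam g e f x * pd d (fun y => ω y g) x) := by
    simp only [cdCov, pd_sub d (hω₂ e f) (DifferentiableAt.fun_sum fun g _ => hΓω e f g),
      pd_sum d fun g _ => hΓω e f g, pd_mul d (differentiableAt_Gam _ e f x) (hω₁ _)]
  simp only [cdT2, pd_cdCov]
  simp only [cdCov, riemann, pd_comm a b (hω c), Gam_symm _ b a, Fin.sum_univ_two]
  ring

theorem cdT2_cdCov_sub_swap_eq_rnd {ω : Pt → Fin 2 → ℝ} {x : Pt}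
    (hω : ∀ b, ContDiffAt ℝ 2 (fun y => ω y b) x) (a b c : Fin 2) :
    cdT2 (cdCov ω) x a b c - cdT2 (cdCov ω) x b a c
      = rnd x a c * ω x b - rnd x b c * ω x a := by
  simp only [cdT2_cdCov_sub_swap hω, riemann_eq, sub_mul, ite_mul, one_mul, zero_mul,
    Finset.sum_sub_distrib, Finset.sum_ite_eq', Finset.mem_univ, if_true, neg_sub]

theorem rndInv_eq_inv_aDen (x : Pt) (a b : Fin 2) :
    rndInv x a b = (aDen x)⁻¹ * if a = b then 1 else 0 := by
  rw [aDen, inv_div]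
  rfl

theorem sum_rndInv_mul_rnd (x : Pt) : ∑ a, ∑ b, rndInv x a b * rnd x a b = 2 := by
  have hne := (aDen_pos x).ne'
  simp only [rndInv_eq_inv_aDen, rnd_eq, Fin.sum_univ_two]
  grind

theorem sum_rndInv_mul_mul_rnd (x : Pt) (ω : Fin 2 → ℝ) (c : Fin 2) :
    ∑ a, ∑ b, rndInv x a b * (ω a * rnd x b c) = ω c := by
  have hne := (aDen_pos x).ne'
  simp only [rndInv_eq_inv_aDen, rnd_eq, Fin.sum_univ_two]
  grind

section Hessian

variable {f : Pt → ℝ} {x : Pt}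

theorem hess_symm (hf : ContDiffAt ℝ 2 f x) (a b : Fin 2) : hess f x a b = hess f x b a := by
  change pd a (pd b f) x - ∑ c, Gam c a b x * pd c f x = _
  simp only [pd_comm a b hf, Gam_symm _ a b]
  rfl

theorem contDiffAt_hess {m n : WithTop ℕ∞} (hf : ContDiffAt ℝ n f x) (hmn : m + 2 ≤ n)
    (a b : Fin 2) : ContDiffAt ℝ m (fun y => hess f y a b) x := by
  have hmn' : m + 1 + 1 ≤ n := by rwa [add_assoc, one_add_one_eq_two]
  have hpd (c : Fin 2) : ContDiffAt ℝ (m + 1) (pd c f) x := contDiffAt_pd c hf hmn'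
  exact (contDiffAt_pd a (hpd b) le_rfl).sub <| ContDiffAt.sum fun c _ =>
    (contDiff_Gam c a b).contDiffAt.mul ((hpd c).of_le le_self_add)

theorem contDiffAt_lap {m n : WithTop ℕ∞} (hf : ContDiffAt ℝ n f x) (hmn : m + 2 ≤ n) :
    ContDiffAt ℝ m (lap f) x :=
  ContDiffAt.sum fun a _ => ContDiffAt.sum fun b _ =>
    (contDiff_rndInv a b).contDiffAt.mul (contDiffAt_hess hf hmn a b)

theorem cdT2_hess_symm (hf : ContDiffAt ℝ 3 f x) (a b c : Fin 2) :
    cdT2 (hess f) x a b c = cdT2 (hess f) x a c b := by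
  have hsymm : ∀ᶠ y in nhds x, ∀ d e, hess f y d e = hess f y e d :=
    ((hf.of_le (by norm_num : (2 : WithTop ℕ∞) ≤ 3)).eventually (by simp)).mono
      fun y hy => hess_symm hy
  have hpd : pd a (fun y => hess f y b c) x = pd a (fun y => hess f y c b) x := by
    have heq : (fun y => hess f y b c) =ᶠ[nhds x] fun y => hess f y c b :=
      hsymm.mono fun y hy => hy b c
    simp only [pd, heq.fderiv_eq]
  simp only [cdT2, hpd, fun d e => hsymm.self_of_nhds d e]
  ring

theorem sum_rndInv_mul_cdT2_hess (hf : ContDiffAt ℝ 3 f x) (c : Fin 2) :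
    ∑ a, ∑ b, rndInv x a b * cdT2 (hess f) x a b c = pd c (lap f) x + pd c f x := by
  have hpd (b : Fin 2) : ContDiffAt ℝ 2 (pd b f) x := contDiffAt_pd b hf (by norm_num)
  have hhess (a b : Fin 2) : DifferentiableAt ℝ (fun y => hess f y a b) x :=
    (contDiffAt_hess (m := 1) hf (by norm_num) a b).differentiableAt one_ne_zero
  have hcomm (a b : Fin 2) : cdT2 (hess f) x a b c
      = cdT2 (hess f) x c a b + (rnd x a b * pd c f x - pd a f x * rnd x b c) := by
    have hricci : cdT2 (hess f) x a c b - cdT2 (hess f) x c a b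
        = rnd x a b * pd c f x - rnd x c b * pd a f x := cdT2_cdCov_sub_swap_eq_rnd hpd a c b
    rw [cdT2_hess_symm hf, rnd_symm x b c]
    linear_combination hricci
  have htrace : pd c (lap f) x = ∑ a, ∑ b, rndInv x a b * cdT2 (hess f) x c a b :=
    pd_trace hhess c
  simp only [hcomm, mul_add, mul_sub, Finset.sum_add_distrib, Finset.sum_sub_distrib, ← htrace,
    sum_rndInv_mul_mul_rnd x fun a => pd a f x]
  simp only [← mul_assoc, ← Finset.sum_mul, sum_rndInv_mul_rnd]
  ring

/-- The tensor `∇_a∇_b f - (Δf + f) σ_{ab}`, minus the cofactor tensor of `∇_a∇_b f + f σ_{ab}`.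
It is divergence free, and its trace is `-(Δ + 2)f`. -/
def hessCofactor (f : Pt → ℝ) (x : Pt) (a b : Fin 2) : ℝ :=
  hess f x a b - (lap f x + f x) * rnd x a b

theorem contDiffAt_hessCofactor {m n : WithTop ℕ∞} (hf : ContDiffAt ℝ n f x) (hmn : m + 2 ≤ n)
    (a b : Fin 2) : ContDiffAt ℝ m (fun y => hessCofactor f y a b) x :=
  (contDiffAt_hess hf hmn a b).sub <|
    ((contDiffAt_lap hf hmn).add (hf.of_le (le_self_add.trans hmn))).mul <|
      contDiff_aDen.contDiffAt.mul contDiffAt_const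

theorem sum_rndInv_mul_cdT2_hessCofactor (hf : ContDiffAt ℝ 3 f x) (c : Fin 2) :
    ∑ a, ∑ b, rndInv x a b * cdT2 (hessCofactor f) x a b c = 0 := by
  have hf1 : DifferentiableAt ℝ f x := hf.differentiableAt (by simp)
  have hhess (a b : Fin 2) : DifferentiableAt ℝ (fun y => hess f y a b) x :=
    (contDiffAt_hess (m := 1) hf (by norm_num) a b).differentiableAt one_ne_zero
  have hlap : DifferentiableAt ℝ (lap f) x :=
    (contDiffAt_lap (m := 1) hf (by norm_num)).differentiableAt one_ne_zero
  have hrnd (a b : Fin 2) : DifferentiableAt ℝ (fun y => rnd y a b) x :=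
    (differentiableAt_aDen x).mul (differentiableAt_const _)
  have hcd (a b : Fin 2) : cdT2 (hessCofactor f) x a b c
      = cdT2 (hess f) x a b c - (pd a (lap f) x + pd a f x) * rnd x b c := by
    unfold hessCofactor
    rw [cdT2_sub hhess fun d e => (hlap.fun_add hf1).fun_mul (hrnd d e),
      cdT2_mul (hlap.fun_add hf1) hrnd, cdT2_rnd, pd_add a hlap hf1, mul_zero, add_zero]
  simp only [hcd, mul_sub, Finset.sum_sub_distrib, sum_rndInv_mul_cdT2_hess hf,
    sum_rndInv_mul_mul_rnd x fun a => pd a (lap f) x + pd a f x, sub_self]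

end Hessian

section Wronskian

variable {u v α : Pt → ℝ} {x : Pt}

/-- The Wronskian one-form `u dv - v du`, whose divergence is `u Δv - v Δu`. -/
def wronskianForm (u v : Pt → ℝ) (x : Pt) (a : Fin 2) : ℝ := u x * pd a v x - v x * pd a u x

theorem contDiffAt_wronskianForm {m n : WithTop ℕ∞} (hu : ContDiffAt ℝ n u x)
    (hv : ContDiffAt ℝ n v x) (hmn : m + 1 ≤ n) (a : Fin 2) :
    ContDiffAt ℝ m (fun y => wronskianForm u v y a) x :=
  ((hu.of_le (le_self_add.trans hmn)).mul (contDiffAt_pd a hv hmn)).sub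
    ((hv.of_le (le_self_add.trans hmn)).mul (contDiffAt_pd a hu hmn))

theorem cdCov_wronskianForm (hu : ContDiffAt ℝ 2 u x) (hv : ContDiffAt ℝ 2 v x) (a b : Fin 2) :
    cdCov (wronskianForm u v) x a b = u x * hess v x a b - v x * hess u x a b
      + (pd a u x * pd b v x - pd a v x * pd b u x) := by
  have hu1 : DifferentiableAt ℝ u x := hu.differentiableAt two_ne_zero
  have hv1 : DifferentiableAt ℝ v x := hv.differentiableAt two_ne_zero
  have hpu : DifferentiableAt ℝ (pd b u) x :=
    (contDiffAt_pd (m := 1) b hu (by norm_num)).differentiableAt one_ne_zero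
  have hpv : DifferentiableAt ℝ (pd b v) x :=
    (contDiffAt_pd (m := 1) b hv (by norm_num)).differentiableAt one_ne_zero
  have hpd : pd a (fun y => wronskianForm u v y b) x
      = pd a u x * pd b v x + u x * pd a (pd b v) x
        - (pd a v x * pd b u x + v x * pd a (pd b u) x) := by
    simp only [wronskianForm, pd_sub a (hu1.fun_mul hpv) (hv1.fun_mul hpu), pd_mul a hu1 hpv,
      pd_mul a hv1 hpu]
  simp only [cdCov, hess, hpd]
  simp only [wronskianForm, Fin.sum_univ_two]
  ring

/-- The scalar `[u (∇_A∇_B v - ½ Δv σ_{AB}) - v (∇_A∇_B u - ½ Δu σ_{AB})] ∇^A∇^B α`. -/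
def tracelessHessPairing (u v α : Pt → ℝ) (x : Pt) : ℝ :=
  ∑ A, ∑ B,
    (u x * (hess v x A B - (1/2) * lap v x * rnd x A B)
      - v x * (hess u x A B - (1/2) * lap u x * rnd x A B))
    * (∑ a, ∑ b, rndInv x A a * rndInv x B b * hess α x a b)

/-- The vector field `S^{ab} (u ∂_b v - v ∂_b u)`, with `S` the tensor `hessCofactor α`. -/
def wronskianFlux (u v α : Pt → ℝ) : Pt → Fin 2 → ℝ :=
  sharp (contractVec (hessCofactor α) (sharp (wronskianForm u v)))

theorem contDiffAt_sharp {n : WithTop ℕ∞} {ω : Pt → Fin 2 → ℝ}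
    (hω : ∀ b, ContDiffAt ℝ n (fun y => ω y b) x) (a : Fin 2) :
    ContDiffAt ℝ n (fun y => sharp ω y a) x :=
  ContDiffAt.sum fun b _ => (contDiff_rndInv a b).contDiffAt.mul (hω b)

theorem contDiffAt_wronskianFlux (hu : ContDiffAt ℝ 2 u x) (hv : ContDiffAt ℝ 2 v x)
    (hα : ContDiffAt ℝ 3 α x) : ContDiffAt ℝ 1 (wronskianFlux u v α) x :=
  contDiffAt_pi.2 <| contDiffAt_sharp fun a => ContDiffAt.sum fun b _ =>
    (contDiffAt_hessCofactor hα (by norm_num) a b).mul <|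
      contDiffAt_sharp (contDiffAt_wronskianForm hu hv (by norm_num)) b

theorem divg_wronskianFlux (hu : ContDiffAt ℝ 2 u x) (hv : ContDiffAt ℝ 2 v x)
    (hα : ContDiffAt ℝ 3 α x) :
    divg (wronskianFlux u v α) x = ∑ a, ∑ b, rndInv x a b *
      ∑ c, hessCofactor α x b c * ∑ d, rndInv x c d * cdCov (wronskianForm u v) x a d := by
  have hS (a b : Fin 2) : DifferentiableAt ℝ (fun y => hessCofactor α y a b) x :=
    (contDiffAt_hessCofactor (m := 1) hα (by norm_num) a b).differentiableAt one_ne_zero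
  have hW (a : Fin 2) : DifferentiableAt ℝ (fun y => wronskianForm u v y a) x :=
    (contDiffAt_wronskianForm (m := 1) hu hv (by norm_num) a).differentiableAt one_ne_zero
  have hY := differentiableAt_sharp hW
  set Y := sharp (wronskianForm u v) with hYdef
  have hSY (a : Fin 2) : DifferentiableAt ℝ (fun y => contractVec (hessCofactor α) Y y a) x :=
    DifferentiableAt.fun_sum fun b _ => (hS a b).fun_mul (hY b)
  calc divg (wronskianFlux u v α) x
      = ∑ a, ∑ b, rndInv x a b *
          ∑ c, (cdT2 (hessCofactor α) x a b c * Y x c + hessCofactor α x b c * cdVec Y x a c) := by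
        simp only [wronskianFlux, ← hYdef, divg_sharp hSY, cdCov_contractVec hS hY]
    _ = ∑ c, (∑ a, ∑ b, rndInv x a b * cdT2 (hessCofactor α) x a b c) * Y x c
          + ∑ a, ∑ b, rndInv x a b * ∑ c, hessCofactor α x b c * cdVec Y x a c := by
        simp only [Fin.sum_univ_two]
        ring
    _ = _ := by
        simp only [sum_rndInv_mul_cdT2_hessCofactor hα, hYdef, cdVec_sharp hW, zero_mul,
          Finset.sum_const_zero, zero_add]

theorem tracelessHessPairing_eq (hu : ContDiffAt ℝ 2 u x) (hv : ContDiffAt ℝ 2 v x)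
    (hα : ContDiffAt ℝ 3 α x) :
    tracelessHessPairing u v α x = divg (wronskianFlux u v α) x
      + (1/2) * (u x * lap v x - v x * lap u x) * (lap α x + 2 * α x) := by
  have hne := (aDen_pos x).ne'
  have hsymm : hess α x 1 0 = hess α x 0 1 := hess_symm (hα.of_le (by norm_num)) 1 0
  rw [divg_wronskianFlux hu hv hα]
  simp only [cdCov_wronskianForm hu hv, tracelessHessPairing, hessCofactor, lap,
    rndInv_eq_inv_aDen, rnd_eq]
  simp only [Fin.sum_univ_two, mul_ite, ite_mul, mul_one, mul_zero, zero_mul, if_true, zero_ne_one,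
    one_ne_zero, if_false, add_zero, zero_add, sub_zero, hsymm]
  field_simp
  ring

end Wronskian

section Support

theorem tsupport_pd_subset (a : Fin 2) (f : Pt → ℝ) : tsupport (pd a f) ⊆ tsupport f :=
  tsupport_fderiv_apply_subset ℝ _

theorem pd_eq_zero_of_notMem_tsupport (a : Fin 2) {f : Pt → ℝ} {x : Pt} (hx : x ∉ tsupport f) :
    pd a f x = 0 :=
  image_eq_zero_of_notMem_tsupport fun h => hx (tsupport_pd_subset a f h)

theorem lap_eq_zero_of_notMem_tsupport {f : Pt → ℝ} {x : Pt} (hx : x ∉ tsupport f) :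
    lap f x = 0 := by
  have hpd (c : Fin 2) : pd c f x = 0 := pd_eq_zero_of_notMem_tsupport c hx
  have hpd₂ (a b : Fin 2) : pd a (pd b f) x = 0 :=
    pd_eq_zero_of_notMem_tsupport a fun h => hx (tsupport_pd_subset b f h)
  simp only [lap, hess, cdCov, hpd, hpd₂, mul_zero, Finset.sum_const_zero, sub_zero]

theorem tsupport_component_subset (Y : Pt → Fin 2 → ℝ) (a : Fin 2) :
    tsupport (fun y => Y y a) ⊆ tsupport Y :=
  tsupport_comp_subset (g := fun w : Fin 2 → ℝ => w a) rfl Y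

theorem divg_eq_zero_of_notMem_tsupport {Y : Pt → Fin 2 → ℝ} {x : Pt} (hx : x ∉ tsupport Y) :
    divg Y x = 0 := by
  have hpd (a : Fin 2) : pd a (fun y => Y y a) x = 0 :=
    pd_eq_zero_of_notMem_tsupport a fun h => hx (tsupport_component_subset Y a h)
  simp only [divg_eq, hpd, image_eq_zero_of_notMem_tsupport hx, Pi.zero_apply, mul_zero, sub_zero,
    Finset.sum_const_zero]

theorem tsupport_wronskianFlux_subset (u v α : Pt → ℝ) :
    tsupport (wronskianFlux u v α) ⊆ tsupport v := by
  refine closure_minimal (Function.support_subset_iff'.2 fun x hx => ?_) (isClosed_tsupport v)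
  ext a
  simp only [wronskianFlux, sharp, contractVec, wronskianForm,
    image_eq_zero_of_notMem_tsupport hx, pd_eq_zero_of_notMem_tsupport _ hx, mul_zero, zero_mul,
    sub_zero, Finset.sum_const_zero, Pi.zero_apply]

end Support

theorem contDiff_of_forall_mem_tsupport {E F : Type*} [NormedAddCommGroup E] [NormedSpace ℝ E]
    [NormedAddCommGroup F] [NormedSpace ℝ F] {n : WithTop ℕ∞} {f : E → F}
    (hf : ∀ x ∈ tsupport f, ContDiffAt ℝ n f x) : ContDiff ℝ n f :=
  (contMDiff_of_tsupport fun x hx => (hf x hx).contMDiffAt).contDiff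

section Integral

theorem integrable_pd (a : Fin 2) {f : Pt → ℝ} (hf : ContDiff ℝ 1 f) (hc : HasCompactSupport f) :
    Integrable (pd a f) :=
  ((hf.continuous_fderiv one_ne_zero).clm_apply continuous_const).integrable_of_hasCompactSupport
    (hc.fderiv_apply ℝ _)

theorem integral_pd_eq_zero (a : Fin 2) {f : Pt → ℝ} (hf : ContDiff ℝ 1 f)
    (hc : HasCompactSupport f) : ∫ x, pd a f x = 0 := by
  have hparts := integral_mul_fderiv_eq_neg_fderiv_mul_of_integrable (μ := (volume : Measure Pt))
    (f := fun _ => (1 : ℝ)) (g := f) (v := Pi.single a 1) (by simp)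
    (by simp only [one_mul]; exact integrable_pd a hf hc)
    (by simpa only [one_mul] using hf.continuous.integrable_of_hasCompactSupport hc)
    (fun x _ => by fun_prop) (fun x _ => hf.contDiffAt.differentiableAt one_ne_zero)
  simpa [pd] using hparts

variable {Y : Pt → Fin 2 → ℝ}

theorem contDiff_aDen_mul {n : WithTop ℕ∞} (hY : ContDiff ℝ n Y) (a : Fin 2) :
    ContDiff ℝ n fun y => aDen y * Y y a :=
  contDiff_aDen.mul (contDiff_pi.1 hY a)

theorem hasCompactSupport_aDen_mul (hc : HasCompactSupport Y) (a : Fin 2) :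
    HasCompactSupport fun y => aDen y * Y y a :=
  hc.of_isClosed_subset (isClosed_tsupport _) <|
    (tsupport_mul_subset_right).trans (tsupport_component_subset Y a)

theorem integrable_divg_mul_aDen (hY : ContDiff ℝ 1 Y) (hc : HasCompactSupport Y) :
    Integrable fun x => divg Y x * aDen x := by
  simp only [divg_mul_aDen fun b => (contDiff_pi.1 hY b).contDiffAt.differentiableAt one_ne_zero]
  exact integrable_finsetSum _ fun a _ =>
    integrable_pd a (contDiff_aDen_mul hY a) (hasCompactSupport_aDen_mul hc a)

theorem integral_divg_mul_aDen_eq_zero (hY : ContDiff ℝ 1 Y) (hc : HasCompactSupport Y) :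
    ∫ x, divg Y x * aDen x = 0 := by
  simp only [divg_mul_aDen fun b => (contDiff_pi.1 hY b).contDiffAt.differentiableAt one_ne_zero]
  rw [integral_finsetSum _ fun a _ =>
    integrable_pd a (contDiff_aDen_mul hY a) (hasCompactSupport_aDen_mul hc a)]
  exact Finset.sum_eq_zero fun a _ =>
    integral_pd_eq_zero a (contDiff_aDen_mul hY a) (hasCompactSupport_aDen_mul hc a)

theorem setIntegral_divg_mul_aDen_eq_zero {U : Set Pt} (hY : ContDiff ℝ 1 Y)
    (hc : HasCompactSupport Y) (hYU : tsupport Y ⊆ U) : ∫ x in U, divg Y x * aDen x = 0 := by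
  rw [setIntegral_eq_integral_of_forall_compl_eq_zero, integral_divg_mul_aDen_eq_zero hY hc]
  exact fun x hx => by rw [divg_eq_zero_of_notMem_tsupport fun h => hx (hYU h), zero_mul]

end Integral

section Pairing

variable {U : Set Pt} {u v α : Pt → ℝ}

theorem integrable_wronskian_lap_mul_aDen (hu : ∀ x ∈ tsupport v, ContDiffAt ℝ 2 u x)
    (hv : ContDiff ℝ 2 v) (hvsupp : HasCompactSupport v)
    (hα : ∀ x ∈ tsupport v, ContDiffAt ℝ 2 α x) :
    Integrable fun x =>
      (1/2) * (u x * lap v x - v x * lap u x) * (lap α x + 2 * α x) * aDen x := by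
  set R : Pt → ℝ := fun x =>
    (1/2) * (u x * lap v x - v x * lap u x) * (lap α x + 2 * α x) * aDen x with hR
  have hRv : tsupport R ⊆ tsupport v := by
    refine closure_minimal (Function.support_subset_iff'.2 fun x hx => ?_) (isClosed_tsupport v)
    simp only [hR, lap_eq_zero_of_notMem_tsupport hx, image_eq_zero_of_notMem_tsupport hx, mul_zero,
      zero_mul, sub_zero]
  have hlap {f : Pt → ℝ} {x : Pt} (hf : ContDiffAt ℝ 2 f x) : ContinuousAt (lap f) x :=
    (contDiffAt_lap (m := 0) hf (by norm_num)).continuousAt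
  have hRcont : Continuous R := continuous_of_tsupport fun x hx => by
    have hu := hu x (hRv hx)
    have hα := hα x (hRv hx)
    have hv := hv.contDiffAt (x := x)
    exact ((continuousAt_const.mul ((hu.continuousAt.mul (hlap hv)).sub
      (hv.continuousAt.mul (hlap hu)))).mul ((hlap hα).add
      (continuousAt_const.mul hα.continuousAt))).mul (differentiableAt_aDen x).continuousAt
  exact hRcont.integrable_of_hasCompactSupport (hvsupp.of_isClosed_subset (isClosed_tsupport R) hRv)

theorem contDiff_wronskianFlux (hu : ∀ x ∈ tsupport v, ContDiffAt ℝ 2 u x) (hv : ContDiff ℝ 2 v)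
    (hα : ∀ x ∈ tsupport v, ContDiffAt ℝ 3 α x) : ContDiff ℝ 1 (wronskianFlux u v α) :=
  contDiff_of_forall_mem_tsupport fun x hx =>
    have hxv := tsupport_wronskianFlux_subset u v α hx
    contDiffAt_wronskianFlux (hu x hxv) hv.contDiffAt (hα x hxv)

theorem symmetric_traceless_hessian_pairing_vanishes_general (hU : IsOpen U)
    (hu : ContDiffOn ℝ 2 u U) (hv : ContDiff ℝ 2 v) (hvsupp : HasCompactSupport v)
    (hvU : tsupport v ⊆ U) (hα : ContDiffOn ℝ 3 α U) :
    ∫ x in U, tracelessHessPairing u v α x * aDen x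
      = ∫ x in U, (1/2) * (u x * lap v x - v x * lap u x) * (lap α x + 2 * α x) * aDen x := by
  have hu' {x : Pt} (hx : x ∈ U) := hu.contDiffAt (hU.mem_nhds hx)
  have hα' {x : Pt} (hx : x ∈ U) := hα.contDiffAt (hU.mem_nhds hx)
  have hflux : ContDiff ℝ 1 (wronskianFlux u v α) :=
    contDiff_wronskianFlux (fun x hx => hu' (hvU hx)) hv fun x hx => hα' (hvU hx)
  have hfluxv := tsupport_wronskianFlux_subset u v α
  have hfluxsupp : HasCompactSupport (wronskianFlux u v α) :=
    hvsupp.of_isClosed_subset (isClosed_tsupport _) hfluxv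
  rw [setIntegral_congr_fun hU.measurableSet fun x hx => by
      rw [tracelessHessPairing_eq (hu' hx) hv.contDiffAt (hα' hx), add_mul],
    integral_add (integrable_divg_mul_aDen hflux hfluxsupp).integrableOn
      (integrable_wronskian_lap_mul_aDen (fun x hx => hu' (hvU hx)) hv hvsupp
        fun x hx => (hα' (hvU hx)).of_le (by norm_num)).integrableOn,
    setIntegral_divg_mul_aDen_eq_zero hflux hfluxsupp (hfluxv.trans hvU), zero_add]

end Pairing

/-- if `u, v` are smooth on `S²`, `v` is compactly supported in an open
set `U`, and `α` is smooth on `U` with `(Δ+2)α = 0` on `U`, then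
`∫_U [u(∇_A∇_B v - ½(Δv)σ_{AB}) - v(∇_A∇_B u - ½(Δu)σ_{AB})] ∇^A∇^B α = 0`
(integration with respect to the round area measure). -/
theorem symmetric_traceless_hessian_pairing_vanishes
    (U : Set Pt) (hU : IsOpen U)
    (u v : Pt → ℝ) (hu : ContDiff ℝ (⊤ : ℕ∞) u) (hv : ContDiff ℝ (⊤ : ℕ∞) v)
    (hvsupp : HasCompactSupport v) (hvU : tsupport v ⊆ U)
    (α : Pt → ℝ) (hα : ContDiffOn ℝ (⊤ : ℕ∞) α U)
    (hαeig : ∀ x ∈ U, lap α x + 2 * α x = 0) :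
    (∫ x in U,
      (∑ A, ∑ B,
        (u x * (hess v x A B - (1/2) * lap v x * rnd x A B)
          - v x * (hess u x A B - (1/2) * lap u x * rnd x A B))
        * (∑ a, ∑ b, rndInv x A a * rndInv x B b * hess α x a b)) * aDen x) = 0 := by
  have hgeneral := symmetric_traceless_hessian_pairing_vanishes_general hU
    (contDiff_infty.1 hu 2).contDiffOn (contDiff_infty.1 hv 2) hvsupp hvU (contDiffOn_infty.1 hα 3)
  refine hgeneral.trans (setIntegral_eq_zero_of_forall_eq_zero fun x hx => ?_)
  rw [hαeig x hx, mul_zero, zero_mul]
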